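/- Let q be a prime power and let r, δ, M, N be positive integers with δ > 1 and q ≥ N > M > 1. Let C_1 = ⋯ = C_{M-1} be [r+δ-1, r, δ]_q MDS codes, let g be an integer with 0 ≤ g ≤ δ/(N-M+1) and g < r, and let C_M be an [r+δ-1, r-g, δ+g]_q MDS code with C_M ⊆ C_1. Let C = (C_1,...,C_M)·A be the matrix-product code, where A is an M×N NSC matrix over F_q. Then C is an optimal (r,δ)-LRC if and only if r = g + 1. -/

import Mathlib

namespace LRCPaper

noncomputable section Defs

variable {F : Type} [Field F] [Fintype F] [DecidableEq F]

/-- The punctured code of `C` on the coordinate set `S`: delete all coordinates outside `S`. -/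
def punctureCode {ι : Type} [Fintype ι] (C : Submodule F (ι → F)) (S : Finset ι) :
    Submodule F ({ x // x ∈ S } → F) :=
  C.map (LinearMap.funLeft F F (fun j : { x // x ∈ S } => (j : ι)))

/-- Every nonzero codeword of `C` has Hamming weight at least `δ`
(i.e. the minimum distance of `C` is at least `δ`). -/
def minWtGe {ι : Type} [Fintype ι] (C : Submodule F (ι → F)) (δ : ℕ) : Prop :=
  ∀ c ∈ C, c ≠ 0 → δ ≤ hammingNorm c

/-- The minimum Hamming distance of the linear code `C` is exactly `d`. -/
def minDistIs {ι : Type} [Fintype ι] (C : Submodule F (ι → F)) (d : ℕ) : Prop :=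
  (∃ c ∈ C, c ≠ 0 ∧ hammingNorm c = d) ∧ minWtGe C d

/-- The `i`-th code symbol of `C` has `(r, δ)`-locality. -/
def symbolHasLocality {ι : Type} [Fintype ι] (C : Submodule F (ι → F)) (r δ : ℕ) (i : ι) :
    Prop :=
  ∃ S : Finset ι, i ∈ S ∧ S.card ≤ r + δ - 1 ∧ minWtGe (punctureCode C S) δ

/-- `C` is an `(r, δ)`-locally repairable code. -/
def IsLRC {ι : Type} [Fintype ι] (C : Submodule F (ι → F)) (r δ : ℕ) : Prop :=
  ∀ i : ι, symbolHasLocality C r δ i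

/-- The right-hand side `n - k + 1 - (⌈k/r⌉ - 1)(δ - 1)` of the Singleton-type bound
for `(r, δ)`-LRCs, as an integer. -/
def optBound (n k r δ : ℕ) : ℤ :=
  (n : ℤ) - (k : ℤ) + 1 - (⌈(k : ℚ) / (r : ℚ)⌉ - 1) * ((δ : ℤ) - 1)

/-- `C` is an optimal `(r, δ)`-LRC with parameters `[card ι, k, d]`. -/
def IsOptimalLRC {ι : Type} [Fintype ι] (C : Submodule F (ι → F)) (k d r δ : ℕ) : Prop :=
  IsLRC C r δ ∧ Module.finrank F ↥C = k ∧ minDistIs C d ∧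
    (d : ℤ) = optBound (Fintype.card ι) k r δ

/-- `C` is an optimal `(r, δ)`-LRC (its minimum distance meets the Singleton-type bound). -/
def IsOptimalLRCCode {ι : Type} [Fintype ι] (C : Submodule F (ι → F)) (r δ : ℕ) : Prop :=
  IsLRC C r δ ∧ ∃ d : ℕ, minDistIs C d ∧
    (d : ℤ) = optBound (Fintype.card ι) (Module.finrank F ↥C) r δ

/-- The linear map underlying the matrix-product construction: it sends
`(c_1, …, c_M)` to `(∑_ℓ c_ℓ a_{ℓ,1}, …, ∑_ℓ c_ℓ a_{ℓ,N})`. -/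
def mpMap {ι : Type} [Fintype ι] {M N : ℕ} (A : Matrix (Fin M) (Fin N) F) :
    (Fin M → ι → F) →ₗ[F] (Fin N × ι → F) where
  toFun c := fun p => ∑ ℓ : Fin M, c ℓ p.2 * A ℓ p.1
  map_add' x y := by
    funext p
    simp [add_mul, Finset.sum_add_distrib]
  map_smul' a x := by
    funext p
    simp [Finset.mul_sum, mul_assoc]

/-- The matrix-product code `(C_1, …, C_M) · A`, a linear code of length `N * card ι`
with coordinates indexed by `Fin N × ι`. -/
def matrixProductCode {ι : Type} [Fintype ι] {M N : ℕ}
    (Cs : Fin M → Submodule F (ι → F)) (A : Matrix (Fin M) (Fin N) F) :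
    Submodule F (Fin N × ι → F) :=
  (Submodule.pi Set.univ Cs).map (mpMap A)

/-- The linear code of length `N` generated by the first `i` rows of `A`. -/
def rowSpanCode {M N : ℕ} (A : Matrix (Fin M) (Fin N) F) (i : ℕ) :
    Submodule F (Fin N → F) :=
  Submodule.span F {w : Fin N → F | ∃ ℓ : Fin M, (ℓ : ℕ) < i ∧ w = A ℓ}

/-- `A` is nonsingular by columns (NSC): for every `i ≤ M`, every `i × i` submatrix
formed by choosing `i` columns of the first `i` rows of `A` is nonsingular. -/
def IsNSC {M N : ℕ} (A : Matrix (Fin M) (Fin N) F) : Prop :=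
  ∀ (i : ℕ) (hi : i ≤ M) (f : Fin i → Fin N), StrictMono f →
    (Matrix.of fun a b : Fin i => A (Fin.castLE hi a) (f b)).det ≠ 0

/-- Evaluation map underlying generalized Reed–Solomon codes:
`p ↦ (v_1 p(a_1), …, v_n p(a_n))`. -/
def grsMap {n : ℕ} (a v : Fin n → F) : Polynomial F →ₗ[F] (Fin n → F) where
  toFun p := fun i => v i * Polynomial.eval (a i) p
  map_add' p q := by funext i; simp [mul_add]
  map_smul' c p := by funext i; simp [mul_left_comm]

/-- The generalized Reed–Solomon code `GRS_k(a, v)`. -/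
def GRSCode {n : ℕ} (k : ℕ) (a v : Fin n → F) : Submodule F (Fin n → F) :=
  (Polynomial.degreeLT F k).map (grsMap a v)

/-- The set of indices of nonzero columns of `H`. -/
def colSupport {m n : ℕ} (H : Matrix (Fin m) (Fin n) F) : Finset (Fin n) :=
  Finset.univ.filter fun j => ∃ i, H i j ≠ 0

/-- Entry `(i, j)` (0-based) of the `2(δ-1) × (2m-1)` matrix `Ĥ`, built from the distinct
elements `α 0, …, α (m-1)` and nonzero scalars `lam 0, …, lam (m-1)`. -/
def hatEntry (δ m : ℕ) (α lam : ℕ → F) (i j : ℕ) : F :=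
  if i < δ - 1 then (if j < m then lam j * α j ^ i else 0)
  else (if m - 1 ≤ j then lam (2 * m - 2 - j) * α (2 * m - 2 - j) ^ (i - (δ - 1)) else 0)

/-- Entry `(i, j)` (0-based) of the `v(δ-1) × (vm-1)` block-diagonal matrix
`ℋ = H ⊕ ⋯ ⊕ H ⊕ Ĥ` (`v - 2` diagonal copies of `H` followed by `Ĥ`). -/
def calHEntry (δ m v : ℕ) (α lam : ℕ → F) (i j : ℕ) : F :=
  if i < (v - 2) * (δ - 1) then
    (if j < (v - 2) * m ∧ j / m = i / (δ - 1) then lam (j % m) * α (j % m) ^ (i % (δ - 1))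
      else 0)
  else
    (if (v - 2) * m ≤ j then hatEntry δ m α lam (i - (v - 2) * (δ - 1)) (j - (v - 2) * m)
      else 0)

/-- Entry `(i, j)` (0-based) of the `(v(δ-1)+τ) × (vm-1)` matrix `H̃`, obtained by appending
the row block `(A, …, A, Â)` below `ℋ`. -/
def tildeHEntry (δ m v : ℕ) (α lam : ℕ → F) (i j : ℕ) : F :=
  if i < v * (δ - 1) then calHEntry δ m v α lam i j
  else
    lam (if j < (v - 2) * m then j % m
          else (if j - (v - 2) * m < m then j - (v - 2) * m
                else 2 * m - 2 - (j - (v - 2) * m))) *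
      α (if j < (v - 2) * m then j % m
          else (if j - (v - 2) * m < m then j - (v - 2) * m
                else 2 * m - 2 - (j - (v - 2) * m))) ^
        ((δ - 1) + (i - v * (δ - 1)))

end Defs

/-!
For a matrix `A` that is nonsingular by columns, a combination of the first `i + 1` rows involving
the last of them vanishes in at most `i` columns. Reading a word of `(C_0, …, C_{M-1}) · A` one
position at a time, this gives it weight at least `(N - i) d_i`, where `d_i` is the minimum distance
of `C_i` and `i` is the last index with nonzero constituent. For nested codes the bound
`min_i (N - i) d_i` is attained, by the tensor product of a word of `C_i` with a combination of the
first `i + 1` rows that vanishes on the first `i` columns. In the theorem the minimum is attained at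
the last code, so the minimum distance is `(N - M + 1)(δ + g)`. Since the dimension is `M r - g`
with `g < r`, the Singleton-type bound equals `(N - M + 1)(δ + g) + (N - M)(r - g - 1)`, and
`N ≠ M`.
-/

open scoped Matrix

section Hamming

variable {κ ι β : Type*} [Zero β] [DecidableEq β]

theorem hammingNorm_prod_eq_sum [Fintype κ] [Fintype ι] (w : κ × ι → β) :
    hammingNorm w = ∑ i, hammingNorm fun j => w (j, i) := by
  simp only [hammingNorm, Finset.card_filter]
  rw [Fintype.sum_prod_type_right]

theorem sum_ite_ne_zero_eq_mul_hammingNorm [Fintype ι] (x : ι → β) (a : ℕ) :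
    (∑ i, if x i ≠ 0 then a else 0) = a * hammingNorm x := by
  rw [← Finset.sum_filter, Finset.sum_const, smul_eq_mul, mul_comm, hammingNorm]

theorem hammingNorm_comp_le_of_injective [Fintype κ] [Fintype ι] {e : ι → κ}
    (he : Function.Injective e) (w : κ → β) : hammingNorm (w ∘ e) ≤ hammingNorm w :=
  Finset.card_le_card_of_injOn e (fun i hi => by simpa using hi) he.injOn

end Hamming

theorem exists_ne_zero_forall_gt_eq_zero {κ β : Type*} [Preorder κ] [Finite κ] [Zero β]
    {c : κ → β} (hc : c ≠ 0) : ∃ m, c m ≠ 0 ∧ ∀ l, m < l → c l = 0 := by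
  obtain ⟨m, hm⟩ := c.support.toFinite.exists_maximal (Function.support_nonempty_iff.mpr hc)
  exact ⟨m, hm.prop, fun l hl => Function.notMem_support.mp (hm.not_prop_of_gt hl)⟩

theorem finrank_submodule_pi_univ {R κ : Type*} [Semiring R] [StrongRankCondition R] [Fintype κ]
    {V : κ → Type*} [∀ l, AddCommMonoid (V l)] [∀ l, Module R (V l)] (p : ∀ l, Submodule R (V l))
    [∀ l, Module.Free R (p l)] [∀ l, Module.Finite R (p l)] :
    Module.finrank R (Submodule.pi Set.univ p) = ∑ l, Module.finrank R (p l) := by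
  let e : Submodule.pi Set.univ p ≃ₗ[R] ∀ l, p l :=
    { Equiv.Set.univPi fun l => (p l : Set (V l)) with
      map_add' := fun _ _ => rfl
      map_smul' := fun _ _ => rfl }
  rw [e.finrank_eq, Module.finrank_pi_fintype]

theorem exists_ne_zero_vecMul_eq_zero_of_lt {R : Type*} [CommRing R] [IsDomain R] {M N : ℕ}
    (hMN : M ≤ N) (A : Matrix (Fin M) (Fin N) R) (m : Fin M) :
    ∃ v ≠ 0, (∀ l, m < l → v l = 0) ∧ ∀ j : Fin N, (j : ℕ) < m → (v ᵥ* A) j = 0 := by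
  -- The columns of `B` are the constraints on `v`; there is none in column `m`, so `det B = 0`.
  let B : Matrix (Fin M) (Fin M) R := Matrix.of fun k l =>
    if l < m then A k (Fin.castLE hMN l) else if m < l then if k = l then 1 else 0 else 0
  have hB : B.det = 0 := Matrix.det_eq_zero_of_column_eq_zero m fun k => by simp [B]
  obtain ⟨v, hv0, hvB⟩ := Matrix.exists_vecMul_eq_zero_iff.mpr hB
  refine ⟨v, hv0, fun l hl => ?_, fun j hj => ?_⟩
  · simpa [B, Matrix.vecMul, dotProduct, hl, hl.not_gt] using congrFun hvB l
  · have hjm : (⟨j, hj.trans m.2⟩ : Fin M) < m := hj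
    simpa [B, Matrix.vecMul, dotProduct, hjm] using congrFun hvB ⟨j, hj.trans m.2⟩

section NSC

variable {F : Type} [Field F] {M N : ℕ} {A : Matrix (Fin M) (Fin N) F}

theorem IsNSC.card_vecMul_eq_zero_le [DecidableEq F] (hA : IsNSC A) {v : Fin M → F} {m : Fin M}
    (hm : v m ≠ 0) (hv : ∀ l, m < l → v l = 0) :
    Finset.card {j | (v ᵥ* A) j = 0} ≤ (m : ℕ) := by
  by_contra! hcard
  let f := Finset.orderEmbOfCardLe _ hcard
  have hf (b) : (v ᵥ* A) (f b) = 0 := by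
    simpa using Finset.orderEmbOfCardLe_mem _ hcard b
  let u : Fin (m + 1) → F := fun a => v (Fin.castLE m.2 a)
  have hu : u ᵥ* Matrix.of (fun a b => A (Fin.castLE m.2 a) (f b)) = 0 := by
    funext b
    rw [Pi.zero_apply, ← hf b]
    refine Fintype.sum_of_injective _ (Fin.castLE_injective m.2) _ _ (fun l hl => ?_) fun _ => rfl
    have hml : m < l := by simpa [Fin.range_castLE, Nat.succ_le_iff] using hl
    rw [hv l hml, zero_mul]
  have hu0 : u = 0 := Matrix.eq_zero_of_vecMul_eq_zero (hA _ m.2 f f.strictMono) hu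
  exact hm (congrFun hu0 (Fin.last m))

theorem IsNSC.le_hammingNorm_vecMul [DecidableEq F] (hA : IsNSC A) {v : Fin M → F} {m : Fin M}
    (hm : v m ≠ 0) (hv : ∀ l, m < l → v l = 0) : N - m ≤ hammingNorm (v ᵥ* A) := by
  have hzeros := hA.card_vecMul_eq_zero_le hm hv
  have hsplit : Finset.card {j | (v ᵥ* A) j = 0} + hammingNorm (v ᵥ* A) = N := by
    simpa [hammingNorm] using Finset.card_filter_add_card_filter_not (s := Finset.univ)
      fun j => (v ᵥ* A) j = 0
  omega

theorem IsNSC.exists_hammingNorm_vecMul_eq [DecidableEq F] (hA : IsNSC A) (hMN : M ≤ N)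
    (m : Fin M) :
    ∃ v : Fin M → F, (∀ l, m < l → v l = 0) ∧ hammingNorm (v ᵥ* A) = N - m := by
  obtain ⟨v, hv0, hv, hzero⟩ := exists_ne_zero_vecMul_eq_zero_of_lt hMN A m
  refine ⟨v, hv, le_antisymm ?_ ?_⟩
  · calc hammingNorm (v ᵥ* A) ≤ Finset.card {j : Fin N | ¬ (j : ℕ) < m} :=
          Finset.card_le_card <| Finset.monotone_filter_right _ fun j _ hj hjm => hj (hzero j hjm)
      _ = N - m := by
        have hsplit := Finset.card_filter_add_card_filter_not (s := Finset.univ)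
          fun j : Fin N => (j : ℕ) < m
        rw [Fin.card_filter_val_lt, Finset.card_univ, Fintype.card_fin] at hsplit
        omega
  · obtain ⟨t, ht, htop⟩ := exists_ne_zero_forall_gt_eq_zero hv0
    have htm : t ≤ m := not_lt.mp fun h => ht (hv t h)
    exact (Nat.sub_le_sub_left htm N).trans (hA.le_hammingNorm_vecMul ht htop)

end NSC

section MatrixProduct

variable {F ι : Type} [Field F] [Fintype ι] {M N : ℕ} {A : Matrix (Fin M) (Fin N) F}
  {Cs : Fin M → Submodule F (ι → F)}

theorem mpMap_column (A : Matrix (Fin M) (Fin N) F) (c : Fin M → ι → F) (i : ι) :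
    (fun j => mpMap A c (j, i)) = (fun l => c l i) ᵥ* A :=
  rfl

theorem block_mem_of_mem_matrixProductCode {C : Submodule F (ι → F)} (hCs : ∀ l, Cs l ≤ C)
    {w : Fin N × ι → F} (hw : w ∈ matrixProductCode Cs A) (j : Fin N) :
    (fun i => w (j, i)) ∈ C := by
  obtain ⟨c, hc, rfl⟩ := hw
  have hblock : (fun i => mpMap A c (j, i)) = ∑ l, A l j • c l := by
    funext i
    simp [mpMap, mul_comm]
  rw [hblock]
  exact C.sum_mem fun l _ => C.smul_mem _ (hCs l (hc l (Set.mem_univ l)))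

variable [DecidableEq F]

theorem hammingNorm_mpMap_smul (A : Matrix (Fin M) (Fin N) F) (v : Fin M → F) (c : ι → F) :
    hammingNorm (mpMap A fun l => v l • c) = hammingNorm (v ᵥ* A) * hammingNorm c := by
  have hcolumn (i : ι) : hammingNorm (fun j => mpMap A (fun l => v l • c) (j, i)) =
      if c i ≠ 0 then hammingNorm (v ᵥ* A) else 0 := by
    have hsmul : (fun l => (v l • c) i) = c i • v := by
      funext l
      simp [mul_comm]
    rw [mpMap_column, hsmul, Matrix.smul_vecMul]
    split_ifs with hi
    · exact hammingNorm_smul (fun _ => IsSMulRegular.of_ne_zero hi) _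
    · simp [not_not.mp hi]
  rw [hammingNorm_prod_eq_sum, Finset.sum_congr rfl fun i _ => hcolumn i,
    sum_ite_ne_zero_eq_mul_hammingNorm]

theorem IsNSC.mul_hammingNorm_le_hammingNorm_mpMap (hA : IsNSC A) {c : Fin M → ι → F} {m : Fin M}
    (hc : ∀ l, m < l → c l = 0) :
    (N - m) * hammingNorm (c m) ≤ hammingNorm (mpMap A c) :=
  calc (N - m) * hammingNorm (c m) = ∑ i, if c m i ≠ 0 then N - (m : ℕ) else 0 :=
        (sum_ite_ne_zero_eq_mul_hammingNorm _ _).symm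
    _ ≤ ∑ i, hammingNorm fun j => mpMap A c (j, i) := by
        gcongr with i
        split_ifs with hi
        · exact hA.le_hammingNorm_vecMul hi fun l hl => congrFun (hc l hl) i
        · exact Nat.zero_le _
    _ = hammingNorm (mpMap A c) := (hammingNorm_prod_eq_sum _).symm

end MatrixProduct

section Dimension

variable {F ι : Type} [Field F] [Fintype ι] {M N : ℕ} {A : Matrix (Fin M) (Fin N) F}

theorem IsNSC.mpMap_injective (hA : IsNSC A) (hMN : M ≤ N) :
    Function.Injective (mpMap (ι := ι) A) := by
  classical
  refine (injective_iff_map_eq_zero _).mpr fun c hAc => ?_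
  by_contra hc
  obtain ⟨m, hm, htop⟩ := exists_ne_zero_forall_gt_eq_zero hc
  have hpos : 0 < (N - m) * hammingNorm (c m) :=
    Nat.mul_pos (by omega) (hammingNorm_pos_iff.mpr hm)
  have hle := hA.mul_hammingNorm_le_hammingNorm_mpMap htop
  rw [hAc, hammingNorm_zero] at hle
  exact hpos.not_ge hle

theorem finrank_matrixProductCode (hA : IsNSC A) (hMN : M ≤ N)
    (Cs : Fin M → Submodule F (ι → F)) :
    Module.finrank F (matrixProductCode Cs A) = ∑ l, Module.finrank F (Cs l) := by
  rw [matrixProductCode,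
    ← (Submodule.equivMapOfInjective _ (hA.mpMap_injective hMN) _).finrank_eq,
    finrank_submodule_pi_univ]

theorem sum_fin_ite_lt_sub_one {R : Type*} [AddCommMonoid R] {M : ℕ} (hM : 0 < M) (a b : R) :
    (∑ l : Fin M, if (l : ℕ) < M - 1 then a else b) = (M - 1) • a + b := by
  obtain ⟨m, rfl⟩ := Nat.exists_eq_succ_of_ne_zero hM.ne'
  simp [Fin.sum_univ_castSucc]

theorem finrank_matrixProductCode_ite (hA : IsNSC A) (hM : 0 < M) (hMN : M ≤ N)
    (C₁ C₂ : Submodule F (ι → F)) :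
    Module.finrank F (matrixProductCode (fun l : Fin M => if (l : ℕ) < M - 1 then C₁ else C₂) A) =
      (M - 1) * Module.finrank F C₁ + Module.finrank F C₂ := by
  simp only [finrank_matrixProductCode hA hMN,
    apply_ite fun C : Submodule F (ι → F) => Module.finrank F C, sum_fin_ite_lt_sub_one hM,
    smul_eq_mul]

end Dimension

section MinimumDistance

variable {F ι : Type} [Field F] [DecidableEq F] [Fintype ι] {M N : ℕ}
  {A : Matrix (Fin M) (Fin N) F} {Cs : Fin M → Submodule F (ι → F)}

theorem minDistIs.unique {C : Submodule F (ι → F)} {d e : ℕ} (hd : minDistIs C d)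
    (he : minDistIs C e) : d = e := by
  obtain ⟨⟨x, hx, hx0, rfl⟩, hdmin⟩ := hd
  obtain ⟨⟨y, hy, hy0, rfl⟩, hemin⟩ := he
  exact le_antisymm (hdmin y hy hy0) (hemin x hx hx0)

theorem minWtGe_matrixProductCode (hA : IsNSC A) {d : Fin M → ℕ} (hd : ∀ l, minWtGe (Cs l) (d l))
    {e : ℕ} (he : ∀ l : Fin M, e ≤ (N - l) * d l) : minWtGe (matrixProductCode Cs A) e := by
  rintro _ ⟨c, hc, rfl⟩ hAc
  have hc0 : c ≠ 0 := fun h => hAc (by rw [h, map_zero])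
  obtain ⟨m, hm, htop⟩ := exists_ne_zero_forall_gt_eq_zero hc0
  calc e ≤ (N - m) * d m := he m
    _ ≤ (N - m) * hammingNorm (c m) :=
      Nat.mul_le_mul_left _ (hd m (c m) (hc m (Set.mem_univ m)) hm)
    _ ≤ hammingNorm (mpMap A c) := hA.mul_hammingNorm_le_hammingNorm_mpMap htop

theorem exists_mem_matrixProductCode_hammingNorm_eq (hA : IsNSC A) (hMN : M ≤ N) (m : Fin M)
    {c : ι → F} (hc : ∀ l ≤ m, c ∈ Cs l) :
    ∃ w ∈ matrixProductCode Cs A, hammingNorm w = (N - m) * hammingNorm c := by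
  obtain ⟨v, hv, hvA⟩ := hA.exists_hammingNorm_vecMul_eq hMN m
  refine ⟨mpMap A fun l => v l • c, ⟨_, fun l _ => ?_, rfl⟩, ?_⟩
  · rcases le_or_gt l m with hlm | hml
    · exact (Cs l).smul_mem _ (hc l hlm)
    · simp [hv l hml]
  · rw [hammingNorm_mpMap_smul, hvA]

theorem minDistIs_matrixProductCode (hA : IsNSC A) (hMN : M ≤ N) (hCs : Antitone Cs)
    {d : Fin M → ℕ} (hd : ∀ l, minDistIs (Cs l) (d l)) (m : Fin M)
    (hm : ∀ l : Fin M, (N - m) * d m ≤ (N - l) * d l) :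
    minDistIs (matrixProductCode Cs A) ((N - m) * d m) := by
  obtain ⟨c, hc, hc0, hcd⟩ := (hd m).1
  obtain ⟨w, hw, hwc⟩ := exists_mem_matrixProductCode_hammingNorm_eq hA hMN m
    fun l hl => hCs hl hc
  have hw0 : hammingNorm w ≠ 0 :=
    hwc ▸ mul_ne_zero (by omega) (hammingNorm_ne_zero_iff.mpr hc0)
  exact ⟨⟨w, hw, hammingNorm_ne_zero_iff.mp hw0, hcd ▸ hwc⟩,
    minWtGe_matrixProductCode hA (fun l => (hd l).2) hm⟩

theorem minDistIs_matrixProductCode_ite (hA : IsNSC A) (hM : 0 < M) (hMN : M ≤ N)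
    {C₁ C₂ : Submodule F (ι → F)} (hC : C₂ ≤ C₁) {d₁ d₂ : ℕ} (h₁ : minDistIs C₁ d₁)
    (h₂ : minDistIs C₂ d₂) (hd : (N - M + 1) * d₂ ≤ (N - M + 2) * d₁) :
    minDistIs (matrixProductCode (fun l : Fin M => if (l : ℕ) < M - 1 then C₁ else C₂) A)
      ((N - M + 1) * d₂) := by
  let d (l : Fin M) : ℕ := if (l : ℕ) < M - 1 then d₁ else d₂
  let last : Fin M := ⟨M - 1, by omega⟩
  have hanti : Antitone fun l : Fin M => if (l : ℕ) < M - 1 then C₁ else C₂ := by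
    intro a b (hab : (a : ℕ) ≤ b)
    dsimp only
    split_ifs with hb ha
    exacts [le_rfl, absurd (hab.trans_lt hb) ha, hC, le_rfl]
  have hlast : (N - last) * d last = (N - M + 1) * d₂ := by
    simp only [last, d, lt_irrefl, if_false]
    congr 1
    omega
  rw [← hlast]
  refine minDistIs_matrixProductCode hA hMN hanti (fun l => ?_) last fun l => ?_
  · dsimp only [d]
    split_ifs
    exacts [h₁, h₂]
  · rw [hlast]
    dsimp only [d]
    split_ifs with hl
    · exact hd.trans (Nat.mul_le_mul_right _ (by omega))
    · exact Nat.mul_le_mul_right _ (by omega)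

end MinimumDistance

section Locality

variable {F ι : Type} [Field F] [DecidableEq F] [Fintype ι]

theorem minWtGe_punctureCode_map {κ : Type} [Fintype κ] {D : Submodule F (κ → F)}
    {C : Submodule F (ι → F)} {δ : ℕ} (hC : minWtGe C δ) (e : ι ↪ κ)
    (hD : ∀ w ∈ D, w ∘ e ∈ C) : minWtGe (punctureCode D (Finset.univ.map e)) δ := by
  let e' (i : ι) : { x // x ∈ Finset.univ.map e } :=
    ⟨e i, Finset.mem_map_of_mem e (Finset.mem_univ i)⟩
  have hinj : Function.Injective e' := fun a b h => e.injective (congrArg Subtype.val h)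
  have hsurj : Function.Surjective e' := by
    rintro ⟨x, hx⟩
    obtain ⟨i, -, rfl⟩ := Finset.mem_map.mp hx
    exact ⟨i, rfl⟩
  rintro _ ⟨w, hw, rfl⟩ hne
  set x := LinearMap.funLeft F F (fun j : { x // x ∈ Finset.univ.map e } => (j : κ)) w
  have hx : x ∘ e' ≠ 0 := fun h => hne (hsurj.injective_comp_right h)
  exact (hC (x ∘ e') (hD w hw) hx).trans (hammingNorm_comp_le_of_injective hinj x)

theorem isLRC_matrixProductCode {M N r δ : ℕ} {C : Submodule F (ι → F)} (hC : minWtGe C δ)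
    (hι : Fintype.card ι ≤ r + δ - 1) {Cs : Fin M → Submodule F (ι → F)} (hCs : ∀ l, Cs l ≤ C)
    (A : Matrix (Fin M) (Fin N) F) : IsLRC (matrixProductCode Cs A) r δ := by
  rintro ⟨j, i⟩
  let block : ι ↪ Fin N × ι := ⟨Prod.mk j, Prod.mk_right_injective j⟩
  exact ⟨Finset.univ.map block, Finset.mem_map_of_mem block (Finset.mem_univ i), by simpa using hι,
    minWtGe_punctureCode_map hC block fun w hw => block_mem_of_mem_matrixProductCode hCs hw j⟩

end Locality

section SingletonBound

theorem isOptimalLRCCode_iff {F ι : Type} [Field F] [DecidableEq F] [Fintype ι]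
    {C : Submodule F (ι → F)} {r δ d : ℕ} (hLRC : IsLRC C r δ) (hd : minDistIs C d) :
    IsOptimalLRCCode C r δ ↔ (d : ℤ) = optBound (Fintype.card ι) (Module.finrank F C) r δ := by
  refine ⟨?_, fun h => ⟨hLRC, d, hd, h⟩⟩
  rintro ⟨-, e, he, h⟩
  rwa [hd.unique he]

theorem ceil_div_eq_of_add_eq_mul {k g M r : ℕ} (hg : g < r) (hk : k + g = M * r) :
    ⌈(k : ℚ) / r⌉ = M := by
  have hr : (0 : ℚ) < r := mod_cast Nat.zero_lt_of_lt hg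
  have hk' : (k : ℚ) + g = M * r := mod_cast hk
  have hg' : (g : ℚ) < r := mod_cast hg
  rw [Int.ceil_eq_iff, lt_div_iff₀ hr, div_le_iff₀ hr]
  push_cast
  constructor <;> linarith [(Nat.cast_nonneg g : (0 : ℚ) ≤ g)]

theorem optBound_of_add_eq_mul {k g M N r δ : ℕ} (hg : g < r) (hk : k + g = M * r) :
    optBound (N * (r + δ - 1)) k r δ = (N - M + 1) * (δ + g) + (N - M) * (r - (g + 1)) := by
  have hk' : (k : ℤ) = M * r - g := eq_sub_of_add_eq (mod_cast hk)
  rw [optBound, ceil_div_eq_of_add_eq_mul hg hk, hk']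
  push_cast [show 1 ≤ r + δ by omega]
  ring

theorem cast_le_div_sub_add_one_iff {M N g δ : ℕ} (hMN : M ≤ N) :
    (g : ℚ) ≤ δ / (N - M + 1) ↔ g * (N - M + 1) ≤ δ := by
  have hcast : (N : ℚ) - M + 1 = (N - M + 1 : ℕ) := by push_cast [hMN]; rfl
  rw [hcast, le_div_iff₀ (by positivity)]
  exact_mod_cast Iff.rfl

end SingletonBound

theorem matrixProduct_optimal_iff_general {F ι : Type} [Field F] [DecidableEq F] [Fintype ι]
    {r δ M N g : ℕ} (hι : Fintype.card ι = r + δ - 1) (hM : 0 < M) (hMN : M < N) (hgr : g < r)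
    {C1 CM : Submodule F (ι → F)}
    (hC1k : Module.finrank F C1 = r) (hC1d : minDistIs C1 δ)
    (hCMk : Module.finrank F CM = r - g) (hCMd : minDistIs CM (δ + g))
    {A : Matrix (Fin M) (Fin N) F} (hA : IsNSC A) (hsub : CM ≤ C1)
    (hgδ : (g : ℚ) ≤ (δ : ℚ) / ((N : ℚ) - (M : ℚ) + 1)) :
    IsOptimalLRCCode
        (matrixProductCode (fun i : Fin M => if (i : ℕ) < M - 1 then C1 else CM) A) r δ
      ↔ r = g + 1 := by
  have hg : g * (N - M + 1) ≤ δ := (cast_le_div_sub_add_one_iff hMN.le).mp hgδ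
  have hdist := minDistIs_matrixProductCode_ite hA hM hMN.le hsub hC1d hCMd (by linarith)
  have hLRC := isLRC_matrixProductCode (r := r) hC1d.2 hι.le
    (Cs := fun i : Fin M => if (i : ℕ) < M - 1 then C1 else CM)
    (fun l => by split_ifs; exacts [le_rfl, hsub]) A
  have hdim := finrank_matrixProductCode_ite hA hM hMN.le C1 CM
  have hk : (M - 1) * r + (r - g) + g = M * r := by
    rw [add_assoc, Nat.sub_add_cancel hgr.le, ← Nat.succ_mul, Nat.succ_eq_add_one,
      Nat.sub_add_cancel hM]
  have hNM : (N : ℤ) - M ≠ 0 := by omega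
  rw [isOptimalLRCCode_iff hLRC hdist, hdim, hC1k, hCMk, Fintype.card_prod, Fintype.card_fin, hι,
    optBound_of_add_eq_mul hgr hk]
  push_cast [hMN.le]
  rw [left_eq_add, mul_eq_zero_iff_left hNM]
  omega

/-- Theorem 1: with `C_1 = ⋯ = C_{M-1}` MDS with parameters
`[r+δ-1, r, δ]_q`, `C_M ⊆ C_1` MDS with parameters `[r+δ-1, r-g, δ+g]_q`,
`0 ≤ g ≤ δ/(N-M+1)`, `g < r`, and `A` an `M × N` NSC matrix, the matrix-product code
is an optimal `(r,δ)`-LRC if and only if `r = g + 1`. -/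
theorem matrixProduct_optimal_iff
    (q : ℕ) (hq : IsPrimePow q)
    (F : Type) [Field F] [Fintype F] [DecidableEq F] (hF : Fintype.card F = q)
    (r δ M N g : ℕ) (hδ : 1 < δ) (hr : 0 < r) (hM : 1 < M) (hMN : M < N) (hNq : N ≤ q)
    (hgr : g < r)
    (C1 CM : Submodule F (Fin (r + δ - 1) → F))
    (hC1k : Module.finrank F ↥C1 = r) (hC1d : minDistIs C1 δ)
    (hCMk : Module.finrank F ↥CM = r - g) (hCMd : minDistIs CM (δ + g))
    (A : Matrix (Fin M) (Fin N) F) (hA : IsNSC A)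
    (hsub : CM ≤ C1)
    (hgδ : (g : ℚ) ≤ (δ : ℚ) / ((N : ℚ) - (M : ℚ) + 1)) :
    IsOptimalLRCCode
        (matrixProductCode (fun i : Fin M => if (i : ℕ) < M - 1 then C1 else CM) A) r δ
      ↔ r = g + 1 := by
  exact matrixProduct_optimal_iff_general (Fintype.card_fin _) (by omega) hMN hgr hC1k hC1d hCMk
    hCMd hA hsub hgδ

end LRCPaper
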